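/- Suppose that for the single-input affine system ẋ = f(x)+u g(x) there exists a smooth, positive definite and proper function V:ℝⁿ→ℝ⁺ such that for every x≠0 one of the following holds: (i) (gV)(x)≠0; (ii) (gV)(x)=0 and (fV)(x)<0; or (iii) there exists an integer N=N(x)≥1 such that (gV)(x)=0, (fⁱV)(x)=0 for i=1,…,N, and (Δ₁Δ₂⋯Δ_kV)(x)=0 for all Δ₁,…,Δ_k ∈ Lie{f,g}∖{g} with Σ_{p=1}^{k} order_{{f,g}}Δ_p ≤ N, together with one of the properties (P1) (f^{N+1}V)(x)<0; (P2) N odd and ([[…[[f,g],g],…,g],g]V)(x)≠0 (N iterated brackets with g); (P3) N even and ([[…[[f,g],g],…,g],g]V)(x)<0 (N iterated brackets with g); (P4) (f^{N+1}V)(x)=0 and ([[…[[g,f],f],…,f],f]V)(x)≠0 (N iterated brackets with f). Then the system satisfies Assumption 1 with the same V and with a(s):=2s: for every ξ>0 and every x₀≠0 there exist ε=ε(x₀)∈(0,ξ] and a measurable locally essentially bounded control u(·,x₀):[0,ε]→ℝ such that V(x(ε,0,x₀,u(·,x₀)))<V(x₀) and V(x(s,0,x₀,u(·,x₀)))≤2V(x₀)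 for all s∈[0,ε]. -/

import Mathlib

open MeasureTheory Filter Set

noncomputable section

/-- `Euc n` is the Euclidean state space `ℝⁿ`. -/
abbrev Euc (n : ℕ) : Type := EuclideanSpace ℝ (Fin n)

/-- A control is admissible if it is measurable and locally essentially bounded. -/
def AdmissibleControl {U : Type*} [NormedAddCommGroup U] [MeasurableSpace U]
    (u : ℝ → U) : Prop :=
  Measurable u ∧ ∀ T : ℝ, ∃ C : ℝ, ∀ᵐ t ∂(volume.restrict (Icc (-T) T)), ‖u t‖ ≤ C

/-- `x` is a (Carathéodory) solution of `ẋ = f(x, u(t))` with `x s = x₀`, on `[s, b]`. -/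
def IsSolOn {n : ℕ} {U : Type*} (f : Euc n → U → Euc n) (u : ℝ → U) (s : ℝ)
    (x₀ : Euc n) (x : ℝ → Euc n) (b : ℝ) : Prop :=
  ∀ t ∈ Icc s b, x t = x₀ + ∫ τ in s..t, f (x τ) (u τ)

/-- `x` is a (Carathéodory) solution of `ẋ = f(x, u(t))` with `x s = x₀`, on `[s, ∞)`. -/
def IsSolGlobal {n : ℕ} {U : Type*} (f : Euc n → U → Euc n) (u : ℝ → U) (s : ℝ)
    (x₀ : Euc n) (x : ℝ → Euc n) : Prop :=
  ∀ t, s ≤ t → x t = x₀ + ∫ τ in s..t, f (x τ) (u τ)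

/-- Vector fields on `ℝⁿ`. -/
abbrev VF (n : ℕ) : Type := Euc n → Euc n

/-- `(XV)(x) := DV(x)·X(x)`, the derivative of `V` along the vector field `X`. -/
def vfD {n : ℕ} (X : VF n) (V : Euc n → ℝ) : Euc n → ℝ := fun x => fderiv ℝ V x (X x)

/-- Lie bracket `[X,Y] := (DY)X − (DX)Y`. -/
def lieB {n : ℕ} (X Y : VF n) : VF n := fun x => fderiv ℝ Y x (X x) - fderiv ℝ X x (Y x)

/-- `iterD X V i = XⁱV`, with `X⁰V = V` and `X^{i+1}V = X(XⁱV)`. -/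
def iterD {n : ℕ} (X : VF n) (V : Euc n → ℝ) : ℕ → (Euc n → ℝ)
  | 0 => V
  | i + 1 => vfD X (iterD X V i)

/-- `applyVFs [Δ₁, …, Δ_k] V = Δ₁Δ₂⋯Δ_kV`. -/
def applyVFs {n : ℕ} : List (VF n) → (Euc n → ℝ) → (Euc n → ℝ)
  | [], V => V
  | X :: L, V => vfD X (applyVFs L V)

/-- `adIter X Y N = [[…[[X,Y],Y],…,Y],Y]` (`N` iterated brackets with `Y`). -/
def adIter {n : ℕ} (X Y : VF n) : ℕ → VF n
  | 0 => X
  | k + 1 => lieB (adIter X Y k) Y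

/-- `Lk f g i` is the subspace `L_{i+1}` of the paper:
`L₁ = span{f,g}` and `L_{i+1} = span{[X,Y] : X ∈ L_i, Y ∈ L₁}`. -/
def Lk {n : ℕ} (f g : VF n) : ℕ → Submodule ℝ (VF n)
  | 0 => Submodule.span ℝ {f, g}
  | i + 1 => Submodule.span ℝ
      {Z : VF n | ∃ X ∈ Lk f g i, ∃ Y ∈ Submodule.span ℝ ({f, g} : Set (VF n)), Z = lieB X Y}

/-- The Lie algebra generated by `{f, g}` (the span of all the `L_i`). -/
def LieGen {n : ℕ} (f g : VF n) : Submodule ℝ (VF n) := ⨆ i : ℕ, Lk f g i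

/-- `hasOrder f g Δ k` : `Δ` has order `k` with respect to `{f,g}`:
order `1` iff `Δ ∈ L₁ \ {0}`; order `k > 1` iff `Δ = Δ₁ + Δ₂` with
`Δ₁ ∈ L_k \ {0}` and `Δ₂ ∈ span{∪_{i=1}^{k-1} L_i}`. -/
def hasOrder {n : ℕ} (f g : VF n) (Δ : VF n) : ℕ → Prop
  | 0 => False
  | 1 => Δ ∈ Lk f g 0 ∧ Δ ≠ 0
  | k + 2 => ∃ Δ₁ Δ₂ : VF n, Δ₁ ∈ Lk f g (k + 1) ∧ Δ₁ ≠ 0 ∧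
      Δ₂ ∈ (⨆ i ∈ Finset.range (k + 1), Lk f g i) ∧ Δ = Δ₁ + Δ₂

/-- `(Δ₁Δ₂⋯Δ_kV)(x) = 0` for all `Δ₁,…,Δ_k ∈ Lie{f,g} ∖ {g}` with
`Σ_p order_{{f,g}} Δ_p ≤ N`. -/
def LieCondZero {n : ℕ} (f g : VF n) (V : Euc n → ℝ) (x : Euc n) (N : ℕ) : Prop :=
  ∀ (Δs : List (VF n)) (os : List ℕ), Δs ≠ [] → Δs.length = os.length →
    (∀ p ∈ List.zip Δs os, p.1 ∈ LieGen f g ∧ p.1 ≠ g ∧ hasOrder f g p.1 p.2) →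
    os.sum ≤ N → applyVFs Δs V x = 0

/-! Apply the control `u(t) = v(t / ε)` on `[0, ε]`. If every word of length `1, …, N` in `f` and
`g` annihilates `V` at `x₀`, then `V(x(ε)) - V(x₀)` equals `ε ^ (N + 1)` times the degree `N + 1`
term of the Chen–Fliess series at time `1`, up to `o(ε ^ (N + 1))`. So it is enough to find a
continuous `v` making that term negative; small `ε` then also keeps `V` below `2 V(x₀)`.

Take one of the two vector fields as a small perturbation of the other. By the Leibniz formula for
`ad`, the first order part of the term in the perturbation is a sum over iterated brackets, weighted
by integrals of the perturbing control against powers of the primitive of the other one. Perturbing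
by `f`, a primitive vanishing at both ends leaves only the bracket with `N` copies of `g`, and
homogeneity in the pair of controls turns a small coefficient of `f` into a large control on `g`.
Perturbing by `g`, the first order part is the integral of the control against a polynomial whose
top coefficient is a multiple of the bracket with `N` copies of `f`, so minus that polynomial is a
suitable control. -/

open Finset.HasAntidiagonal (antidiagonal)

attribute [local instance] LieRing.ofAssociativeRing

section ChenTerm

variable {S : Type*} [AddCommGroup S] [Module ℝ S]

/-- The degree `m` term of the Chen–Fliess series of `ẋ = α X + β Y` for the observable `h`: the
sum over all words of length `m` in `X` and `Y` of the iterated integral over `[0, σ]` of the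
corresponding word in `α` and `β`, times the word applied to `h` and evaluated by `ev`. Vector
fields are encoded as endomorphisms of the space of observables. -/
def chenTerm (ev : S →ₗ[ℝ] ℝ) (X Y : Module.End ℝ S) (α β : ℝ → ℝ) : ℕ → S → ℝ → ℝ
  | 0, h, _ => ev h
  | m + 1, h, σ => ∫ s in (0 : ℝ)..σ,
      (α s * chenTerm ev X Y α β m (X h) s + β s * chenTerm ev X Y α β m (Y h) s)

/-- The part of `chenTerm` of degree zero in the coefficient `α` of `X`, for `β` with primitive
`B`. -/
def chenCoeffZero (ev : S →ₗ[ℝ] ℝ) (Y : Module.End ℝ S) (B : ℝ → ℝ) (m : ℕ) (h : S) (σ : ℝ) : ℝ :=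
  B σ ^ m / m.factorial * ev ((Y ^ m) h)

/-- The part of `chenTerm` of degree one in the coefficient `α` of `X`, for `β` with primitive
`B`, sorted by the iterated commutators of `X` with `Y`. -/
def chenCoeffOne (ev : S →ₗ[ℝ] ℝ) (X Y : Module.End ℝ S) (α B : ℝ → ℝ) : ℕ → S → ℝ → ℝ
  | 0, _, _ => 0
  | m + 1, h, σ => ∑ p ∈ antidiagonal m,
      (∫ s in (0 : ℝ)..σ, α s * (B s ^ p.1 / p.1.factorial)) * (B σ ^ p.2 / p.2.factorial) *
        ev (((LieAlgebra.ad ℝ (Module.End ℝ S) Y ^ p.1) X) ((Y ^ p.2) h))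

variable (ev : S →ₗ[ℝ] ℝ) (X Y : Module.End ℝ S) {α β B : ℝ → ℝ}

theorem continuous_chenTerm (hα : Continuous α) (hβ : Continuous β) (m : ℕ) (h : S) :
    Continuous (chenTerm ev X Y α β m h) := by
  induction m generalizing h with
  | zero => exact continuous_const
  | succ m ih =>
    exact intervalIntegral.continuous_primitive
      (fun _ _ => ((hα.mul (ih _)).add (hβ.mul (ih _))).intervalIntegrable _ _) 0

theorem chenTerm_swap (α β : ℝ → ℝ) (m : ℕ) (h : S) (σ : ℝ) :
    chenTerm ev X Y α β m h σ = chenTerm ev Y X β α m h σ := by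
  induction m generalizing h σ with
  | zero => rfl
  | succ m ih => simp only [chenTerm, ih, add_comm]

theorem chenTerm_smul_smul (α β : ℝ → ℝ) (c : ℝ) (m : ℕ) (h : S) (σ : ℝ) :
    chenTerm ev X Y (c • α) (c • β) m h σ = c ^ m * chenTerm ev X Y α β m h σ := by
  induction m generalizing h σ with
  | zero => simp only [chenTerm, pow_zero, one_mul]
  | succ m ih =>
    simp only [chenTerm, ih, Pi.smul_apply, smul_eq_mul, ← intervalIntegral.integral_const_mul]
    congr 1 with s
    ring

theorem chenTerm_one_const (c : ℝ) (h : S) :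
    chenTerm ev X Y 1 (fun _ => c) 1 h 1 = ev (X h) + c * ev (Y h) := by
  simp [chenTerm]

theorem continuous_chenCoeffZero (hB : Continuous B) (m : ℕ) (h : S) :
    Continuous (chenCoeffZero ev Y B m h) := by
  unfold chenCoeffZero
  fun_prop

theorem continuous_chenCoeffOne (hα : Continuous α) (hB : Continuous B) (m : ℕ) (h : S) :
    Continuous (chenCoeffOne ev X Y α B m h) := by
  cases m with
  | zero => exact continuous_const
  | succ m =>
    refine continuous_finsetSum _ fun p _ => ?_
    have : Continuous fun σ => ∫ s in (0 : ℝ)..σ, α s * (B s ^ p.1 / p.1.factorial) :=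
      intervalIntegral.continuous_primitive
        (fun _ _ => Continuous.intervalIntegrable (by fun_prop) _ _) 0
    fun_prop

theorem chenCoeffZero_succ (hβ : Continuous β) (hB : ∀ s, HasDerivAt B (β s) s) (hB0 : B 0 = 0)
    (m : ℕ) (h : S) (σ : ℝ) :
    chenCoeffZero ev Y B (m + 1) h σ =
      ∫ s in (0 : ℝ)..σ, β s * chenCoeffZero ev Y B m (Y h) s := by
  have hBc : Continuous B := continuous_iff_continuousAt.2 fun s => (hB s).continuousAt
  have hderiv : ∀ s, HasDerivAt (chenCoeffZero ev Y B (m + 1) h)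
      (β s * chenCoeffZero ev Y B m (Y h) s) s := fun s => by
    refine ((((hB s).pow (m + 1)).div_const ((m + 1).factorial : ℝ)).mul_const
      (ev ((Y ^ (m + 1)) h))).congr_deriv ?_
    simp only [chenCoeffZero, Nat.factorial_succ, pow_succ Y, Module.End.mul_apply]
    push_cast
    field_simp
  rw [intervalIntegral.integral_eq_sub_of_hasDerivAt (fun s _ => hderiv s)
    ((hβ.mul (continuous_chenCoeffZero ev Y hBc m (Y h))).intervalIntegrable _ _)]
  simp [chenCoeffZero, hB0]

theorem sum_ad_eq_chenCoeffZero (m : ℕ) (h : S) (σ : ℝ) :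
    ∑ p ∈ antidiagonal m, (B σ ^ p.1 / p.1.factorial) * (B σ ^ p.2 / p.2.factorial) *
        ev (((LieAlgebra.ad ℝ (Module.End ℝ S) Y ^ p.1) X) ((Y ^ p.2) h)) =
      chenCoeffZero ev Y B m (X h) σ := by
  have hleibniz : (Y ^ m) (X h) = ∑ p ∈ antidiagonal m,
      m.choose p.1 • ((LieAlgebra.ad ℝ (Module.End ℝ S) Y ^ p.1) X) ((Y ^ p.2) h) :=
    LieModule.toEnd_pow_lie ℝ Y X h m
  rw [chenCoeffZero, hleibniz, map_sum, Finset.mul_sum]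
  refine Finset.sum_congr rfl fun p hp => ?_
  obtain rfl := Finset.HasAntidiagonal.mem_antidiagonal.mp hp
  have hchoose : ((p.1 + p.2).choose p.1 : ℝ) =
      (p.1 + p.2).factorial / (p.1.factorial * p.2.factorial) := by
    exact_mod_cast Nat.cast_add_choose ℝ
  rw [map_nsmul, nsmul_eq_mul, hchoose, pow_add]
  field_simp

theorem hasDerivAt_chenCoeffOne_succ (hα : Continuous α) (hB : ∀ s, HasDerivAt B (β s) s)
    (m : ℕ) (h : S) (s : ℝ) :
    HasDerivAt (chenCoeffOne ev X Y α B (m + 1) h)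
      (α s * chenCoeffZero ev Y B m (X h) s + β s * chenCoeffOne ev X Y α B m (Y h) s) s := by
  have hBc : Continuous B := continuous_iff_continuousAt.2 fun s => (hB s).continuousAt
  have hterm : ∀ p ∈ antidiagonal m, HasDerivAt (fun σ =>
      (∫ s in (0 : ℝ)..σ, α s * (B s ^ p.1 / p.1.factorial)) * (B σ ^ p.2 / p.2.factorial) *
        ev (((LieAlgebra.ad ℝ (Module.End ℝ S) Y ^ p.1) X) ((Y ^ p.2) h)))
      (((α s * (B s ^ p.1 / p.1.factorial)) * (B s ^ p.2 / p.2.factorial) +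
        (∫ s in (0 : ℝ)..s, α s * (B s ^ p.1 / p.1.factorial)) *
          ((p.2 : ℝ) * B s ^ (p.2 - 1) * β s / p.2.factorial)) *
        ev (((LieAlgebra.ad ℝ (Module.End ℝ S) Y ^ p.1) X) ((Y ^ p.2) h))) s := fun p _ => by
    have hc : Continuous fun s => α s * (B s ^ p.1 / p.1.factorial) := by fun_prop
    exact ((hc.integral_hasStrictDerivAt 0 s).hasDerivAt.mul
      (((hB s).pow p.2).div_const _)).mul_const _
  refine (HasDerivAt.fun_sum hterm).congr_deriv ?_
  simp only [add_mul, Finset.sum_add_distrib]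
  congr 1
  · rw [← sum_ad_eq_chenCoeffZero, Finset.mul_sum]
    exact Finset.sum_congr rfl fun p _ => by ring
  · cases m with
    | zero => simp [chenCoeffOne]
    | succ m =>
      rw [Finset.Nat.sum_antidiagonal_succ']
      simp only [chenCoeffOne, Finset.mul_sum, Nat.cast_zero, zero_mul, zero_div, mul_zero,
        zero_add]
      refine Finset.sum_congr rfl fun p _ => ?_
      simp only [Nat.factorial_succ, pow_succ Y, Module.End.mul_apply]
      push_cast
      field_simp

theorem chenCoeffOne_succ (hα : Continuous α) (hβ : Continuous β)
    (hB : ∀ s, HasDerivAt B (β s) s) (m : ℕ) (h : S) (σ : ℝ) :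
    chenCoeffOne ev X Y α B (m + 1) h σ = ∫ s in (0 : ℝ)..σ,
      (α s * chenCoeffZero ev Y B m (X h) s + β s * chenCoeffOne ev X Y α B m (Y h) s) := by
  have hBc : Continuous B := continuous_iff_continuousAt.2 fun s => (hB s).continuousAt
  have hzero := continuous_chenCoeffZero ev Y hBc m (X h)
  have hone := continuous_chenCoeffOne ev X Y hα hBc m (Y h)
  rw [intervalIntegral.integral_eq_sub_of_hasDerivAt
    (fun s _ => hasDerivAt_chenCoeffOne_succ ev X Y hα hB m h s)
    (Continuous.intervalIntegrable (by fun_prop) _ _)]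
  simp [chenCoeffOne]

theorem exists_chenTerm_smul_eq (hα : Continuous α) (hβ : Continuous β)
    (hB : ∀ s, HasDerivAt B (β s) s) (hB0 : B 0 = 0) (m : ℕ) (h : S) :
    ∃ R : ℝ → ℝ → ℝ, Continuous (Function.uncurry R) ∧ ∀ l σ,
      chenTerm ev X Y (l • α) β m h σ =
        chenCoeffZero ev Y B m h σ + l * chenCoeffOne ev X Y α B m h σ + l ^ 2 * R l σ := by
  have hBc : Continuous B := continuous_iff_continuousAt.2 fun s => (hB s).continuousAt
  induction m generalizing h with
  | zero => exact ⟨fun _ _ => 0, continuous_const, by simp [chenTerm, chenCoeffZero, chenCoeffOne]⟩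
  | succ m ih =>
    obtain ⟨R₁, hR₁, hX⟩ := ih (X h)
    obtain ⟨R₂, hR₂, hY⟩ := ih (Y h)
    have hX₀ := continuous_chenCoeffZero ev Y hBc m (X h)
    have hX₁ := continuous_chenCoeffOne ev X Y hα hBc m (X h)
    have hY₀ := continuous_chenCoeffZero ev Y hBc m (Y h)
    have hY₁ := continuous_chenCoeffOne ev X Y hα hBc m (Y h)
    refine ⟨fun l σ => ∫ s in (0 : ℝ)..σ,
      (α s * (chenCoeffOne ev X Y α B m (X h) s + l * R₁ l s) + β s * R₂ l s), ?_, fun l σ => ?_⟩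
    · exact intervalIntegral.continuous_parametric_intervalIntegral_of_continuous
        (f := fun (p : ℝ × ℝ) s =>
          α s * (chenCoeffOne ev X Y α B m (X h) s + p.1 * R₁ p.1 s) + β s * R₂ p.1 s)
        (by fun_prop) continuous_snd
    · rw [chenCoeffZero_succ ev Y hβ hB hB0, chenCoeffOne_succ ev X Y hα hβ hB]
      simp only [chenTerm, hX, hY]
      rw [← intervalIntegral.integral_const_mul, ← intervalIntegral.integral_const_mul,
        ← intervalIntegral.integral_add, ← intervalIntegral.integral_add]
      · congr 1 with s
        simp only [Pi.smul_apply, smul_eq_mul]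
        ring
      all_goals exact Continuous.intervalIntegrable (by fun_prop) _ _

theorem chenTerm_zero_left (hβ : Continuous β) (hB : ∀ s, HasDerivAt B (β s) s) (hB0 : B 0 = 0)
    (m : ℕ) (h : S) (σ : ℝ) : chenTerm ev X Y 0 β m h σ = chenCoeffZero ev Y B m h σ := by
  obtain ⟨R, -, hR⟩ :=
    exists_chenTerm_smul_eq ev X Y (continuous_const (y := (0 : ℝ))) hβ hB hB0 m h
  simpa [Pi.zero_def] using hR 0 σ

theorem exists_pos_chenTerm_smul_neg (hα : Continuous α) (hβ : Continuous β)
    (hB : ∀ s, HasDerivAt B (β s) s) (hB0 : B 0 = 0) {m : ℕ} {h : S} {σ : ℝ}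
    (hzero : chenCoeffZero ev Y B m h σ = 0) (hone : chenCoeffOne ev X Y α B m h σ < 0) :
    ∃ l : ℝ, 0 < l ∧ chenTerm ev X Y (l • α) β m h σ < 0 := by
  obtain ⟨R, hR, hexp⟩ := exists_chenTerm_smul_eq ev X Y hα hβ hB hB0 m h
  have hcont : Continuous fun l => chenCoeffOne ev X Y α B m h σ + l * R l σ := by fun_prop
  have hneg : ∀ᶠ l in nhds (0 : ℝ), chenCoeffOne ev X Y α B m h σ + l * R l σ < 0 :=
    hcont.continuousAt.eventually_lt_const (by simpa using hone)
  obtain ⟨l, hl, hl0⟩ :=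
    ((hneg.filter_mono nhdsWithin_le_nhds).and (self_mem_nhdsWithin (s := Ioi (0 : ℝ)))).exists
  refine ⟨l, hl0, ?_⟩
  calc chenTerm ev X Y (l • α) β m h σ
      = l * (chenCoeffOne ev X Y α B m h σ + l * R l σ) := by rw [hexp, hzero]; ring
    _ < 0 := mul_neg_of_pos_of_neg hl0 hl

theorem chenTerm_one_zero (m : ℕ) (h : S) (σ : ℝ) :
    chenTerm ev X Y 1 0 m h σ = σ ^ m / m.factorial * ev ((X ^ m) h) := by
  rw [chenTerm_swap, chenTerm_zero_left ev Y X continuous_one hasDerivAt_id rfl]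
  rfl

theorem exists_chenTerm_neg_of_apply_ne_zero {h : S} (hY : ev (Y h) ≠ 0) :
    ∃ v : ℝ → ℝ, Continuous v ∧ chenTerm ev X Y 1 v 1 h 1 < 0 := by
  refine ⟨fun _ => -(ev (X h) + 1) / ev (Y h), continuous_const, ?_⟩
  rw [chenTerm_one_const, div_mul_cancel₀ _ hY]
  linarith

theorem exists_chenTerm_neg_of_pow_apply_neg {m : ℕ} {h : S} (hX : ev ((X ^ m) h) < 0) :
    ∃ v : ℝ → ℝ, Continuous v ∧ chenTerm ev X Y 1 v m h 1 < 0 := by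
  refine ⟨0, continuous_const, ?_⟩
  rw [chenTerm_one_zero, one_pow]
  exact mul_neg_of_pos_of_neg (by positivity) hX

theorem chenCoeffZero_of_eq_zero {σ : ℝ} (hσ : B σ = 0) {m : ℕ} (hm : m ≠ 0) (h : S) :
    chenCoeffZero ev Y B m h σ = 0 := by
  simp [chenCoeffZero, hσ, hm]

theorem chenCoeffOne_of_eq_zero {σ : ℝ} (hσ : B σ = 0) (N : ℕ) (h : S) :
    chenCoeffOne ev X Y α B (N + 1) h σ = (∫ s in (0 : ℝ)..σ, α s * (B s ^ N / N.factorial)) *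
      ev (((LieAlgebra.ad ℝ (Module.End ℝ S) Y ^ N) X) h) := by
  rw [chenCoeffOne, Finset.sum_eq_single_of_mem (N, 0) (by simp)]
  · simp
  · rintro ⟨p, q⟩ hp hne
    have hq : q ≠ 0 := by
      rintro rfl
      exact hne (by simpa using hp)
    simp [hσ, hq]

/-- A control whose primitive `c s (1 - s)` vanishes at both ends isolates the bracket
`ad_Y^N X` in the first order term. -/
theorem exists_chenTerm_neg_of_ad_pow_right {N : ℕ} {h : S} {c : ℝ}
    (hc : c ^ N * ev (((LieAlgebra.ad ℝ (Module.End ℝ S) Y ^ N) X) h) < 0) :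
    ∃ v : ℝ → ℝ, Continuous v ∧ chenTerm ev X Y 1 v (N + 1) h 1 < 0 := by
  let B : ℝ → ℝ := fun s => c * (s * (1 - s))
  let β : ℝ → ℝ := fun s => c * (1 - 2 * s)
  have hβ : Continuous β := by fun_prop
  have hB : ∀ s, HasDerivAt B (β s) s := fun s =>
    (((hasDerivAt_id' s).mul ((hasDerivAt_id' s).const_sub 1)).const_mul c).congr_deriv (by
      simp only [β]; ring)
  have hB1 : B 1 = 0 := by simp [B]
  have hpos : 0 < ∫ s in (0 : ℝ)..1, (s * (1 - s)) ^ N / N.factorial := by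
    refine intervalIntegral.intervalIntegral_pos_of_pos_on
      (Continuous.intervalIntegrable (by fun_prop) _ _) (fun s hs => ?_) one_pos
    have := mul_pos hs.1 (sub_pos.2 hs.2)
    positivity
  have hone : chenCoeffOne ev X Y 1 B (N + 1) h 1 < 0 := by
    have hint : ∫ s in (0 : ℝ)..1, (1 : ℝ → ℝ) s * (B s ^ N / N.factorial) =
        c ^ N * ∫ s in (0 : ℝ)..1, (s * (1 - s)) ^ N / N.factorial := by
      rw [← intervalIntegral.integral_const_mul]
      congr 1 with s
      simp only [B, Pi.one_apply, mul_pow c]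
      ring
    rw [chenCoeffOne_of_eq_zero ev X Y hB1, hint, mul_right_comm]
    exact mul_neg_of_neg_of_pos hc hpos
  obtain ⟨l, hl, hneg⟩ := exists_pos_chenTerm_smul_neg ev X Y continuous_const hβ hB
    (by simp [B]) (chenCoeffZero_of_eq_zero ev Y hB1 N.succ_ne_zero h) hone
  refine ⟨l⁻¹ • β, hβ.const_smul _, ?_⟩
  have hscale := chenTerm_smul_smul ev X Y 1 (l⁻¹ • β) l (N + 1) h 1
  rw [smul_inv_smul₀ hl.ne'] at hscale
  exact neg_of_mul_neg_right (hscale ▸ hneg) (by positivity)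

/-- The polynomial against which `chenCoeffOne` integrates `α` at time `1` when
`β = 1`. -/
def chenPolynomial (N : ℕ) (h : S) : Polynomial ℝ :=
  ∑ p ∈ antidiagonal N, Polynomial.monomial p.1
    (ev (((LieAlgebra.ad ℝ (Module.End ℝ S) Y ^ p.1) X) ((Y ^ p.2) h)) /
      (p.1.factorial * p.2.factorial))

theorem chenPolynomial_coeff_self (N : ℕ) (h : S) : (chenPolynomial ev X Y N h).coeff N =
    ev (((LieAlgebra.ad ℝ (Module.End ℝ S) Y ^ N) X) h) / N.factorial := by
  rw [chenPolynomial, Polynomial.finsetSum_coeff, Finset.sum_eq_single_of_mem (N, 0) (by simp)]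
  · simp
  · rintro ⟨p, q⟩ hp hne
    refine Polynomial.coeff_monomial_of_ne _ fun hN => hne ?_
    have hsum := Finset.HasAntidiagonal.mem_antidiagonal.mp hp
    ext <;> grind

theorem chenCoeffOne_id (hα : Continuous α) (N : ℕ) (h : S) :
    chenCoeffOne ev X Y α id (N + 1) h 1 =
      ∫ s in (0 : ℝ)..1, α s * (chenPolynomial ev X Y N h).eval s := by
  simp only [chenPolynomial, Polynomial.eval_finsetSum, Polynomial.eval_monomial, Finset.mul_sum]
  rw [intervalIntegral.integral_finsetSum fun p _ =>
    Continuous.intervalIntegrable (by fun_prop) _ _]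
  refine Finset.sum_congr rfl fun p _ => ?_
  simp only [id_eq, one_pow, ← intervalIntegral.integral_mul_const]
  congr 1 with s
  field_simp

theorem integral_eval_mul_self_pos {q : Polynomial ℝ} (hq : q ≠ 0) {a b : ℝ} (hab : a < b) :
    0 < ∫ s in a..b, q.eval s * q.eval s := by
  obtain ⟨c, hc, hqc⟩ : ∃ c ∈ Icc a b, q.eval c ≠ 0 := by
    by_contra! hzero
    exact hq (Polynomial.eq_zero_of_infinite_isRoot q ((Icc_infinite hab).mono hzero))
  exact intervalIntegral.integral_pos hab (Continuous.continuousOn (by fun_prop))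
    (fun s _ => mul_self_nonneg _) ⟨c, hc, mul_self_pos.2 hqc⟩

theorem exists_chenTerm_neg_of_ad_pow_left {N : ℕ} {h : S} (hX : ev ((X ^ (N + 1)) h) = 0)
    (had : ev (((LieAlgebra.ad ℝ (Module.End ℝ S) X ^ N) Y) h) ≠ 0) :
    ∃ v : ℝ → ℝ, Continuous v ∧ chenTerm ev X Y 1 v (N + 1) h 1 < 0 := by
  let q := chenPolynomial ev Y X N h
  have hq : q ≠ 0 := fun h0 => by
    have hcoeff := chenPolynomial_coeff_self ev Y X N h
    rw [show chenPolynomial ev Y X N h = 0 from h0, Polynomial.coeff_zero] at hcoeff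
    exact div_ne_zero had (by positivity) hcoeff.symm
  have hα : Continuous fun s => -q.eval s := by fun_prop
  have hone : chenCoeffOne ev Y X (fun s => -q.eval s) id (N + 1) h 1 < 0 := by
    rw [chenCoeffOne_id ev Y X hα]
    simp only [neg_mul, intervalIntegral.integral_neg]
    exact neg_neg_of_pos (integral_eval_mul_self_pos hq one_pos)
  obtain ⟨l, -, hneg⟩ := exists_pos_chenTerm_smul_neg ev Y X hα continuous_one hasDerivAt_id rfl
    (by rw [chenCoeffZero, hX, mul_zero]) hone
  exact ⟨_, hα.const_smul l, by rwa [chenTerm_swap]⟩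

end ChenTerm

section UniformLimits

theorem tendstoLocallyUniformlyOn_integral {ι E : Type*} [NormedAddCommGroup E] [NormedSpace ℝ E]
    {F : ι → ℝ → E} {f : ℝ → E} {l : Filter ι} {a b : ℝ}
    (hFf : TendstoLocallyUniformlyOn F f l (Icc a b))
    (hF : ∀ᶠ i in l, ContinuousOn (F i) (Icc a b)) (hf : ContinuousOn f (Icc a b)) :
    TendstoLocallyUniformlyOn (fun i σ => ∫ s in a..σ, F i s) (fun σ => ∫ s in a..σ, f s) l
      (Icc a b) := by
  rw [tendstoLocallyUniformlyOn_iff_tendstoUniformlyOn_of_compact isCompact_Icc,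
    Metric.tendstoUniformlyOn_iff] at hFf ⊢
  intro η hη
  let C := |b - a| + 1
  have hC : 0 < C := by positivity
  filter_upwards [hF, hFf (η / C) (by positivity)] with i hFi hclose σ hσ
  have hsub : Icc a σ ⊆ Icc a b := Icc_subset_Icc_right hσ.2
  have hint : ∀ {g : ℝ → E}, ContinuousOn g (Icc a b) → IntervalIntegrable g volume a σ :=
    fun hg => (hg.mono hsub).intervalIntegrable_of_Icc hσ.1
  have hbound : ∀ s ∈ uIoc a σ, ‖f s - F i s‖ ≤ η / C := fun s hs => by
    rw [uIoc_of_le hσ.1] at hs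
    simpa only [dist_eq_norm] using (hclose s (hsub (Ioc_subset_Icc_self hs))).le
  have hlen : |σ - a| < C := by
    rw [abs_of_nonneg (sub_nonneg.2 hσ.1)]
    linarith [le_abs_self (b - a), hσ.2]
  calc dist (∫ s in a..σ, f s) (∫ s in a..σ, F i s)
      = ‖∫ s in a..σ, (f s - F i s)‖ := by
        rw [dist_eq_norm, intervalIntegral.integral_sub (hint hf) (hint hFi)]
    _ ≤ η / C * |σ - a| := intervalIntegral.norm_integral_le_of_norm_le_const hbound
    _ < η / C * C := by gcongr
    _ = η := div_mul_cancel₀ η hC.ne'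

theorem tendstoLocallyUniformlyOn_comp_of_tendstoUniformly {ι α β γ : Type*} [TopologicalSpace α]
    [UniformSpace β] [UniformSpace γ] {F : ι → α → β} {x₀ : β} {l : Filter ι} {h : β → γ}
    (hh : ContinuousAt h x₀) (hF : TendstoUniformly F (fun _ => x₀) l) (s : Set α) :
    TendstoLocallyUniformlyOn (fun i a => h (F i a)) (fun _ => h x₀) l s :=
  (tendsto_prod_top_iff.1 (hh.tendsto.comp (tendsto_prod_top_iff.2 hF)) :
    TendstoUniformly (fun i a => h (F i a)) _ l).tendstoLocallyUniformly.tendstoLocallyUniformlyOn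

end UniformLimits

section ODE

variable {E : Type*} [NormedAddCommGroup E] [NormedSpace ℝ E]

theorem exists_continuous_eq_picard [CompleteSpace E] {F : ℝ → E → E} {tmin tmax : ℝ}
    {t₀ : Icc tmin tmax} {x₀ x : E} {a r L K : NNReal} (hF : IsPicardLindelof F t₀ x₀ a r L K)
    (hx : x ∈ Metric.closedBall x₀ r) :
    ∃ y : ℝ → E, Continuous y ∧ (∀ t, y t ∈ Metric.closedBall x₀ a) ∧
      ∀ t ∈ Icc tmin tmax, y t = ODE.picard F t₀ x y t := by
  obtain ⟨y, hy⟩ := ODE.FunSpace.exists_isFixedPt_next hF hx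
  refine ⟨y.compProj, y.continuous_compProj,
    fun t => y.compProj_mem_closedBall hF.mul_max_le, fun t ht => ?_⟩
  rw [ODE.FunSpace.compProj_of_mem ht, (ODE.FunSpace.isFixedPt_next_iff hF hx).1 hy]

/-- A solution `y` on `[0, 1]` of the system `ẏ = ε (f(y) + v g(y))`, `y(0) = x₀`, obtained from
`ẋ = f(x) + u g(x)` by setting `x(t) = y(t / ε)` and `u(t) = v(t / ε)`. The differential equation
is encoded in integral form, and `y` is required to be continuous on all of `ℝ`. -/
def IsRescaledSol (f g : E → E) (v : ℝ → ℝ) (x₀ : E) (ε : ℝ) (y : ℝ → E) : Prop :=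
  Continuous y ∧ ∀ σ ∈ Icc (0 : ℝ) 1, y σ = x₀ + ε • ∫ s in (0 : ℝ)..σ, (f (y s) + v s • g (y s))

variable {f g : E → E} {v : ℝ → ℝ} {x₀ : E}

theorem isPicardLindelof_smul_Icc {F : ℝ → E → E} {K M : NNReal} {U : Set E} {ε : NNReal}
    (hcont : ∀ x, Continuous fun σ => F σ x)
    (hlip : ∀ σ ∈ Icc (0 : ℝ) 1, LipschitzOnWith K (F σ) U)
    (hbound : ∀ σ ∈ Icc (0 : ℝ) 1, ∀ x ∈ U, ‖F σ x‖ ≤ M)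
    (hU : Metric.closedBall x₀ (M * ε) ⊆ U) :
    IsPicardLindelof (fun σ x => (ε : ℝ) • F σ x) (tmin := 0) (tmax := 1) ⟨0, by simp⟩ x₀
      (M * ε) 0 (M * ε) (‖(ε : ℝ)‖₊ * K) where
  lipschitzOnWith σ hσ :=
    (lipschitzWith_smul (ε : ℝ)).comp_lipschitzOnWith ((hlip σ hσ).mono (by simpa using hU))
  continuousOn x _ := ((hcont x).const_smul (ε : ℝ)).continuousOn
  norm_le σ hσ x hx := by
    have := hbound σ hσ x (hU (by simpa using hx))
    rw [norm_smul, NNReal.norm_eq, mul_comm]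
    push_cast
    gcongr
  mul_max_le := by simp

theorem exists_lipschitzOnWith_and_norm_le (hf : ContDiffAt ℝ 1 f x₀) (hg : ContDiffAt ℝ 1 g x₀)
    (hv : Continuous v) : ∃ K M : NNReal, ∃ U ∈ nhds x₀, ∀ σ ∈ Icc (0 : ℝ) 1,
      LipschitzOnWith K (fun x => f x + v σ • g x) U ∧ ∀ x ∈ U, ‖f x + v σ • g x‖ ≤ M := by
  obtain ⟨Kf, Uf, hUf, hKf⟩ := hf.exists_lipschitzOnWith
  obtain ⟨Kg, Ug, hUg, hKg⟩ := hg.exists_lipschitzOnWith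
  obtain ⟨A, hA⟩ := isCompact_Icc.exists_bound_of_continuousOn (s := Icc (0 : ℝ) 1) hv.continuousOn
  have hA' : ∀ σ ∈ Icc (0 : ℝ) 1, ‖v σ‖₊ ≤ A.toNNReal := fun σ hσ =>
    NNReal.coe_le_coe.1 ((hA σ hσ).trans (Real.le_coe_toNNReal A))
  have hBf : ∀ᶠ x in nhds x₀, ‖f x‖₊ < ‖f x₀‖₊ + 1 :=
    hf.continuousAt.nnnorm.eventually_lt_const (lt_add_one _)
  have hBg : ∀ᶠ x in nhds x₀, ‖g x‖₊ < ‖g x₀‖₊ + 1 :=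
    hg.continuousAt.nnnorm.eventually_lt_const (lt_add_one _)
  refine ⟨Kf + A.toNNReal * Kg, ‖f x₀‖₊ + 1 + A.toNNReal * (‖g x₀‖₊ + 1), _,
    inter_mem (inter_mem hUf hUg) (hBf.and hBg), fun σ hσ => ⟨?_, fun x hx => ?_⟩⟩
  · have hvg : LipschitzOnWith (‖v σ‖₊ * Kg) (fun x => v σ • g x) Ug :=
      (lipschitzWith_smul (v σ)).comp_lipschitzOnWith hKg
    exact ((hKf.mono fun x hx => hx.1.1).add (hvg.mono fun x hx => hx.1.2)).weaken
      (by gcongr; exact hA' σ hσ)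
  · have hvg : ‖v σ • g x‖₊ ≤ A.toNNReal * (‖g x₀‖₊ + 1) := by
      rw [nnnorm_smul]
      exact mul_le_mul' (hA' σ hσ) hx.2.2.le
    exact_mod_cast (nnnorm_add_le _ _).trans (add_le_add hx.2.1.le hvg)

theorem exists_isRescaledSol_tendstoUniformly [CompleteSpace E] (hf : ContDiffAt ℝ 1 f x₀)
    (hg : ContDiffAt ℝ 1 g x₀) (hv : Continuous v) :
    ∃ y : ℝ → ℝ → E, (∀ᶠ ε in nhdsWithin 0 (Ioi 0), IsRescaledSol f g v x₀ ε (y ε)) ∧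
      TendstoUniformly y (fun _ => x₀) (nhdsWithin 0 (Ioi 0)) := by
  obtain ⟨K, M, U, hU, hKM⟩ := exists_lipschitzOnWith_and_norm_le hf hg hv
  have hradius : Tendsto (fun ε : ℝ => M * ε) (nhdsWithin 0 (Ioi 0)) (nhds 0) := by
    have : Continuous fun ε : ℝ => M * ε := by fun_prop
    simpa using (this.tendsto 0).mono_left nhdsWithin_le_nhds
  have hsol : ∀ᶠ ε in nhdsWithin (0 : ℝ) (Ioi 0), ∃ y : ℝ → E,
      IsRescaledSol f g v x₀ ε y ∧ ∀ σ, y σ ∈ Metric.closedBall x₀ (M * ε) := by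
    filter_upwards [hradius.eventually (eventually_closedBall_subset hU),
      self_mem_nhdsWithin] with ε hεU hε
    lift ε to NNReal using hε.le
    obtain ⟨y, hy, hmem, heq⟩ := exists_continuous_eq_picard
      (isPicardLindelof_smul_Icc (fun x => by fun_prop) (fun σ hσ => (hKM σ hσ).1)
        (fun σ hσ => (hKM σ hσ).2) hεU) (Metric.mem_closedBall_self le_rfl)
    refine ⟨y, ⟨hy, fun σ hσ => ?_⟩, by simpa using hmem⟩
    rw [heq σ hσ, ODE.picard_apply, intervalIntegral.integral_smul]
  obtain ⟨y, hy⟩ := hsol.choice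
  refine ⟨y, hy.mono fun ε hε => hε.1, Metric.tendstoUniformly_iff.2 fun η hη => ?_⟩
  filter_upwards [hy, hradius.eventually_lt_const hη] with ε hε hMη σ
  rw [dist_comm]
  exact (hε.2 σ).trans_lt hMη

namespace IsRescaledSol

variable {ε : ℝ} {y : ℝ → E}

theorem apply_zero (hy : IsRescaledSol f g v x₀ ε y) : y 0 = x₀ := by
  simpa only [intervalIntegral.integral_same, smul_zero, add_zero] using hy.2 0 (by simp)

theorem hasDerivWithinAt [CompleteSpace E] (hy : IsRescaledSol f g v x₀ ε y) (hf : Continuous f)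
    (hg : Continuous g) (hv : Continuous v) {s : ℝ} (hs : s ∈ Icc (0 : ℝ) 1) :
    HasDerivWithinAt y (ε • (f (y s) + v s • g (y s))) (Icc 0 1) s := by
  have hyc : Continuous y := hy.1
  have hrhs : Continuous fun s => f (y s) + v s • g (y s) := by fun_prop
  exact (((hrhs.integral_hasStrictDerivAt 0 s).hasDerivAt.const_smul ε).const_add
    x₀).hasDerivWithinAt.congr hy.2 (hy.2 s hs)

theorem apply_sub_eq_integral [CompleteSpace E] (hy : IsRescaledSol f g v x₀ ε y)
    (hf : Continuous f) (hg : Continuous g) (hv : Continuous v) {h : E → ℝ} (hh : ContDiff ℝ 1 h)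
    {σ : ℝ} (hσ : σ ∈ Icc (0 : ℝ) 1) :
    h (y σ) - h x₀ = ε * ∫ s in (0 : ℝ)..σ, fderiv ℝ h (y s) (f (y s) + v s • g (y s)) := by
  have hyc : Continuous y := hy.1
  have hinteg : Continuous fun s => fderiv ℝ h (y s) (f (y s) + v s • g (y s)) :=
    ((hh.continuous_fderiv one_ne_zero).comp hyc).clm_apply (by fun_prop)
  have hderiv : ∀ s ∈ Ioo 0 σ,
      HasDerivAt (fun s => h (y s)) (ε * fderiv ℝ h (y s) (f (y s) + v s • g (y s))) s := by
    intro s hs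
    have hs1 : s < 1 := hs.2.trans_le hσ.2
    have hys : HasDerivAt y (ε • (f (y s) + v s • g (y s))) s :=
      (hy.hasDerivWithinAt hf hg hv ⟨hs.1.le, hs1.le⟩).hasDerivAt (Icc_mem_nhds hs.1 hs1)
    rw [← smul_eq_mul, ← map_smul]
    exact (hh.differentiable one_ne_zero (y s)).hasFDerivAt.comp_hasDerivAt s hys
  rw [← intervalIntegral.integral_const_mul, intervalIntegral.integral_eq_sub_of_hasDerivAt_of_le
    hσ.1 (hh.continuous.comp' hyc).continuousOn hderiv
    (Continuous.intervalIntegrable (hinteg.const_mul ε) _ _), hy.apply_zero]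

theorem isSolOn {n : ℕ} {f g : Euc n → Euc n} {x₀ : Euc n} {y : ℝ → Euc n}
    (hy : IsRescaledSol f g v x₀ ε y) (hε : 0 < ε) :
    IsSolOn (fun x r => f x + r • g x) (fun t => v (t / ε)) 0 x₀ (fun t => y (t / ε)) ε := by
  intro t ht
  have hmem : t / ε ∈ Icc (0 : ℝ) 1 := ⟨div_nonneg ht.1 hε.le, (div_le_one hε).2 ht.2⟩
  have hsubst := intervalIntegral.integral_comp_div (a := 0) (b := t)
    (fun s => f (y s) + v s • g (y s)) hε.ne'
  beta_reduce
  rw [hsubst, zero_div, ← hy.2 _ hmem]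

end IsRescaledSol

end ODE

theorem admissibleControl_of_continuous {U : Type*} [NormedAddCommGroup U] [MeasurableSpace U]
    [BorelSpace U] {u : ℝ → U} (hu : Continuous u) : AdmissibleControl u :=
  ⟨hu.measurable, fun T =>
    let ⟨C, hC⟩ := isCompact_Icc.exists_bound_of_continuousOn (s := Icc (-T) T) hu.continuousOn
    ⟨C, ae_restrict_of_forall_mem measurableSet_Icc hC⟩⟩

section LieDerivative

variable {n : ℕ}

/-- The space of smooth real-valued functions on `ℝⁿ`. -/
def SmoothFun (n : ℕ) : Submodule ℝ (Euc n → ℝ) where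
  carrier := {h | ContDiff ℝ (⊤ : ℕ∞) h}
  add_mem' hh hk := mem_ofPred.2 ((mem_ofPred.1 hh).add (mem_ofPred.1 hk))
  zero_mem' := mem_ofPred.2 contDiff_const
  smul_mem' c _ hh := mem_ofPred.2 ((mem_ofPred.1 hh).const_smul c)

theorem SmoothFun.contDiff (h : SmoothFun n) : ContDiff ℝ (⊤ : ℕ∞) (h : Euc n → ℝ) := h.2

/-- Evaluation of smooth functions at a point. -/
def SmoothFun.eval (x : Euc n) : SmoothFun n →ₗ[ℝ] ℝ :=
  LinearMap.proj x ∘ₗ (SmoothFun n).subtype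

theorem contDiff_vfD {X : VF n} (hX : ContDiff ℝ (⊤ : ℕ∞) X) {h : Euc n → ℝ}
    (hh : ContDiff ℝ (⊤ : ℕ∞) h) : ContDiff ℝ (⊤ : ℕ∞) (vfD X h) :=
  (hh.fderiv_right (by simp)).clm_apply hX

theorem contDiff_adIter {X Y : VF n} (hX : ContDiff ℝ (⊤ : ℕ∞) X) (hY : ContDiff ℝ (⊤ : ℕ∞) Y)
    (k : ℕ) : ContDiff ℝ (⊤ : ℕ∞) (adIter X Y k) := by
  induction k with
  | zero => exact hX
  | succ k ih => exact ih.lieBracket_vectorField hY (by simp)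

theorem vfD_vfD_apply {X Y : VF n} {x : Euc n} (hY : DifferentiableAt ℝ Y x) {h : Euc n → ℝ}
    (hh : DifferentiableAt ℝ (fderiv ℝ h) x) :
    vfD X (vfD Y h) x =
      fderiv ℝ h x (fderiv ℝ Y x (X x)) + fderiv ℝ (fderiv ℝ h) x (X x) (Y x) := by
  have hder : fderiv ℝ (vfD Y h) x = _ := fderiv_clm_apply hh hY
  simp only [vfD, hder, add_apply, ContinuousLinearMap.comp_apply, ContinuousLinearMap.flip_apply]

theorem vfD_lieB {X Y : VF n} (hX : Differentiable ℝ X) (hY : Differentiable ℝ Y)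
    {h : Euc n → ℝ} (hh : ContDiff ℝ 2 h) :
    vfD (lieB X Y) h = vfD X (vfD Y h) - vfD Y (vfD X h) := by
  ext x
  have hsymm : IsSymmSndFDerivAt ℝ h x := hh.contDiffAt.isSymmSndFDerivAt (by simp)
  have hdiff : DifferentiableAt ℝ (fderiv ℝ h) x :=
    (hh.fderiv_right (m := 1) (by norm_num)).differentiable one_ne_zero x
  rw [Pi.sub_apply, vfD_vfD_apply (hY x) hdiff, vfD_vfD_apply (hX x) hdiff, hsymm.eq (X x) (Y x)]
  simp only [vfD, lieB, map_sub]
  ring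

/-- The derivative along the smooth vector field `X`, as an endomorphism of the space of smooth
functions. -/
def lieDerivative (X : VF n) (hX : ContDiff ℝ (⊤ : ℕ∞) X) : Module.End ℝ (SmoothFun n) where
  toFun h := ⟨vfD X h, contDiff_vfD hX (SmoothFun.contDiff h)⟩
  map_add' h k := by
    ext x
    have hh : DifferentiableAt ℝ (h : Euc n → ℝ) x :=
      (SmoothFun.contDiff h).differentiable (by simp) x
    have hk : DifferentiableAt ℝ (k : Euc n → ℝ) x :=
      (SmoothFun.contDiff k).differentiable (by simp) x
    simp only [vfD, Submodule.coe_add, fderiv_add hh hk, add_apply, Pi.add_apply]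
  map_smul' c h := by
    ext x
    simp only [vfD, Submodule.coe_smul, fderiv_const_smul_field, RingHom.id_apply,
      smul_apply, Pi.smul_apply]

theorem lieDerivative_adIter {X Y : VF n} (hX : ContDiff ℝ (⊤ : ℕ∞) X)
    (hY : ContDiff ℝ (⊤ : ℕ∞) Y) (k : ℕ) :
    lieDerivative (adIter X Y k) (contDiff_adIter hX hY k) =
      (-1 : ℝ) ^ k • (LieAlgebra.ad ℝ (Module.End ℝ (SmoothFun n)) (lieDerivative Y hY) ^ k)
        (lieDerivative X hX) := by
  induction k with
  | zero => simp only [pow_zero, one_smul, Module.End.one_apply]; rfl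
  | succ k ih =>
    have hbracket : lieDerivative (adIter X Y (k + 1)) (contDiff_adIter hX hY (k + 1)) =
        lieDerivative (adIter X Y k) (contDiff_adIter hX hY k) * lieDerivative Y hY -
          lieDerivative Y hY * lieDerivative (adIter X Y k) (contDiff_adIter hX hY k) := by
      ext h : 2
      exact vfD_lieB ((contDiff_adIter hX hY k).differentiable (by simp))
        (hY.differentiable (by simp)) ((SmoothFun.contDiff h).of_le (WithTop.coe_le_coe.2 le_top))
    rw [hbracket, ih, pow_succ', pow_succ', Module.End.mul_apply, LieAlgebra.ad_apply,
      Ring.lie_def, smul_mul_assoc, mul_smul_comm]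
    module

theorem coe_lieDerivative_pow {X : VF n} (hX : ContDiff ℝ (⊤ : ℕ∞) X) (h : SmoothFun n) (k : ℕ) :
    ((lieDerivative X hX ^ k) h : Euc n → ℝ) = iterD X h k := by
  induction k with
  | zero => rfl
  | succ k ih => rw [pow_succ', Module.End.mul_apply, iterD, ← ih]; rfl

theorem eval_ad_lieDerivative_pow {X Y : VF n} (hX : ContDiff ℝ (⊤ : ℕ∞) X)
    (hY : ContDiff ℝ (⊤ : ℕ∞) Y) (k : ℕ) (h : SmoothFun n) (x : Euc n) :
    SmoothFun.eval x (((LieAlgebra.ad ℝ (Module.End ℝ (SmoothFun n)) (lieDerivative Y hY) ^ k)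
      (lieDerivative X hX)) h) = (-1) ^ k * vfD (adIter X Y k) h x := by
  have had : (LieAlgebra.ad ℝ (Module.End ℝ (SmoothFun n)) (lieDerivative Y hY) ^ k)
      (lieDerivative X hX) =
        (-1 : ℝ) ^ k • lieDerivative (adIter X Y k) (contDiff_adIter hX hY k) := by
    rw [lieDerivative_adIter, smul_smul, ← mul_pow, neg_one_mul, neg_neg, one_pow, one_smul]
  rw [had]
  rfl

end LieDerivative

section Words

variable {n : ℕ} {f g : VF n}

theorem vfD_smul_left (c : ℝ) (X : VF n) (V : Euc n → ℝ) : vfD (c • X) V = c • vfD X V := by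
  ext x
  simp only [vfD, Pi.smul_apply, map_smul]

theorem vfD_smul_right (c : ℝ) (X : VF n) (V : Euc n → ℝ) : vfD X (c • V) = c • vfD X V := by
  ext x
  simp only [vfD, fderiv_const_smul_field, smul_apply, Pi.smul_apply]

theorem applyVFs_append_singleton (l : List (VF n)) (X : VF n) (V : Euc n → ℝ) :
    applyVFs (l ++ [X]) V = applyVFs l (vfD X V) := by
  induction l with
  | nil => rfl
  | cons Y l ih => simp only [List.cons_append, applyVFs, ih]

theorem applyVFs_map_smul (c : VF n → ℝ) (l : List (VF n)) (V : Euc n → ℝ) :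
    applyVFs (l.map fun X => c X • X) V = (l.map c).prod • applyVFs l V := by
  induction l with
  | nil => simp only [List.map_nil, List.prod_nil, applyVFs, one_smul]
  | cons X l ih =>
    simp only [List.map_cons, List.prod_cons, applyVFs, ih, vfD_smul_left, vfD_smul_right,
      smul_smul, mul_comm]

theorem applyVFs_eq_zero_of_zero_mem {l : List (VF n)} (hl : 0 ∈ l) (V : Euc n → ℝ) :
    applyVFs l V = 0 := by
  induction l with
  | nil => exact absurd hl List.not_mem_nil
  | cons X l ih =>
    rcases List.mem_cons.1 hl with rfl | hl
    · simpa only [applyVFs, zero_smul] using vfD_smul_left 0 0 (applyVFs l V)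
    · simpa only [applyVFs, ih hl, zero_smul] using vfD_smul_right 0 X 0

theorem LieCondZero.applyVFs_eq_zero {V : Euc n → ℝ} {x : Euc n} {N : ℕ}
    (H : LieCondZero f g V x N) {l : List (VF n)} (hl : l ⊆ [f, g]) (hne : l ≠ [])
    (hlen : l.length ≤ N) : applyVFs l V x = 0 := by
  classical
  by_cases h0 : (0 : VF n) ∈ l
  · rw [applyVFs_eq_zero_of_zero_mem h0, Pi.zero_apply]
  -- `2 • g` has order one and is not excluded from the Lie condition, as `g` itself is.
  let c : VF n → ℝ := fun X => if X = g then 2 else 1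
  have hc : ∀ X, c X ≠ 0 := fun X => by dsimp only [c]; split_ifs <;> norm_num
  have hcg : ∀ X ∈ l, c X • X ≠ g := fun X hX => by
    by_cases hXg : X = g
    · have hg0 : g ≠ 0 := fun hg0 => h0 (by rwa [← hg0, ← hXg])
      simp [c, hXg, two_smul, hg0]
    · simp [c, hXg]
  have hspan : ∀ X ∈ l, c X • X ∈ Lk f g 0 := fun X hX =>
    Submodule.smul_mem _ _ (Submodule.subset_span (by simpa using hl hX))
  have hzero := H (l.map fun X => c X • X) (List.replicate l.length 1) (by simp [hne])
    (by simp) ?_ (by simpa using hlen)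
  · have hprod : (l.map c).prod ≠ 0 := List.prod_ne_zero (by simp [hc])
    simpa [applyVFs_map_smul, hprod] using hzero
  · rintro ⟨Δ, o⟩ hp
    obtain ⟨hΔ, ho⟩ := List.of_mem_zip hp
    obtain ⟨X, hX, rfl⟩ := List.mem_map.1 hΔ
    obtain rfl := List.eq_of_mem_replicate ho
    exact ⟨le_iSup (Lk f g) 0 (hspan X hX), hcg X hX, hspan X hX,
      smul_ne_zero (hc X) fun hX0 => h0 (hX0 ▸ hX)⟩

end Words

section ChenFliess

variable {n : ℕ} {f g : VF n} (hf : ContDiff ℝ (⊤ : ℕ∞) f) (hg : ContDiff ℝ (⊤ : ℕ∞) g)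
  {v : ℝ → ℝ} {x₀ : Euc n} {y : ℝ → ℝ → Euc n}

theorem applyVFs_vfD_eq_zero {h : Euc n → ℝ} {m : ℕ}
    (hwords : ∀ l : List (VF n), l ⊆ [f, g] → l ≠ [] → l.length ≤ m → applyVFs l h x₀ = 0)
    {X : VF n} (hX : X ∈ [f, g]) (l : List (VF n)) (hl : l ⊆ [f, g]) (hlm : l.length < m) :
    applyVFs l (vfD X h) x₀ = 0 := by
  rw [← applyVFs_append_singleton]
  exact hwords (l ++ [X]) (by simp [hl, hX]) (by simp) (by simpa using hlm)

theorem tendstoLocallyUniformlyOn_chenTerm_succ (hv : Continuous v)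
    (hy : ∀ᶠ ε in nhdsWithin 0 (Ioi 0), IsRescaledSol f g v x₀ ε (y ε)) {m : ℕ} {h : SmoothFun n}
    (hF : TendstoLocallyUniformlyOn (fun ε σ => vfD f h (y ε σ) / ε ^ m)
      (chenTerm (SmoothFun.eval x₀) (lieDerivative f hf) (lieDerivative g hg) 1 v m
        (lieDerivative f hf h)) (nhdsWithin 0 (Ioi 0)) (Icc 0 1))
    (hG : TendstoLocallyUniformlyOn (fun ε σ => vfD g h (y ε σ) / ε ^ m)
      (chenTerm (SmoothFun.eval x₀) (lieDerivative f hf) (lieDerivative g hg) 1 v m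
        (lieDerivative g hg h)) (nhdsWithin 0 (Ioi 0)) (Icc 0 1)) :
    TendstoLocallyUniformlyOn
      (fun ε σ => ((h : Euc n → ℝ) (y ε σ) - (h : Euc n → ℝ) x₀) / ε ^ (m + 1))
      (chenTerm (SmoothFun.eval x₀) (lieDerivative f hf) (lieDerivative g hg) 1 v (m + 1) h)
      (nhdsWithin 0 (Ioi 0)) (Icc 0 1) := by
  have hterm : ∀ k : SmoothFun n, Continuous
      (chenTerm (SmoothFun.eval x₀) (lieDerivative f hf) (lieDerivative g hg) 1 v m k) :=
    continuous_chenTerm _ _ _ continuous_one hv m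
  have hconst : TendstoLocallyUniformlyOn (fun _ : ℝ => v) v (nhdsWithin 0 (Ioi 0)) (Icc 0 1) :=
    (Metric.tendstoUniformlyOn_iff.2 fun η hη => by simp [hη]).tendstoLocallyUniformlyOn
  have hsum := hF.fun_add (hconst.fun_mul₀ hG hv.continuousOn (hterm _).continuousOn)
  have hvfD : ∀ {X : VF n}, ContDiff ℝ (⊤ : ℕ∞) X → Continuous (vfD X h) := fun hX =>
    (contDiff_vfD hX (SmoothFun.contDiff h)).continuous
  have hint := tendstoLocallyUniformlyOn_integral hsum ?_ ?_
  · rw [tendstoLocallyUniformlyOn_iff_tendstoUniformlyOn_of_compact isCompact_Icc] at hint ⊢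
    refine (hint.congr ?_).congr_right fun σ _ => by simp only [chenTerm, Pi.one_apply, one_mul]
    filter_upwards [hy, self_mem_nhdsWithin] with ε hyε hε σ hσ
    have hε0 : ε ≠ 0 := (mem_Ioi.1 hε).ne'
    beta_reduce
    rw [hyε.apply_sub_eq_integral hf.continuous hg.continuous hv
      ((SmoothFun.contDiff h).of_le (by simp)) hσ, pow_succ', mul_div_mul_left _ _ hε0,
      ← intervalIntegral.integral_div]
    refine intervalIntegral.integral_congr fun s _ => ?_
    simp only [vfD, map_add, map_smul, smul_eq_mul]
    ring
  · filter_upwards [hy] with ε hyε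
    exact ((((hvfD hf).comp hyε.1).div_const _).add
      (hv.mul (((hvfD hg).comp hyε.1).div_const _))).continuousOn
  · exact ((hterm _).add (hv.mul (hterm _))).continuousOn

theorem tendstoLocallyUniformlyOn_chenTerm (hv : Continuous v)
    (hy : ∀ᶠ ε in nhdsWithin 0 (Ioi 0), IsRescaledSol f g v x₀ ε (y ε))
    (hlim : TendstoUniformly y (fun _ => x₀) (nhdsWithin 0 (Ioi 0))) {m : ℕ} {h : SmoothFun n}
    (hwords : ∀ l : List (VF n), l ⊆ [f, g] → l.length < m → applyVFs l h x₀ = 0) :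
    TendstoLocallyUniformlyOn (fun ε σ => (h : Euc n → ℝ) (y ε σ) / ε ^ m)
      (chenTerm (SmoothFun.eval x₀) (lieDerivative f hf) (lieDerivative g hg) 1 v m h)
      (nhdsWithin 0 (Ioi 0)) (Icc 0 1) := by
  induction m generalizing h with
  | zero =>
    simp only [pow_zero, div_one]
    exact tendstoLocallyUniformlyOn_comp_of_tendstoUniformly
      (SmoothFun.contDiff h).continuous.continuousAt hlim (Icc 0 1)
  | succ m ih =>
    have hstep : ∀ {X : VF n}, X ∈ [f, g] → ∀ l : List (VF n), l ⊆ [f, g] → l.length < m →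
        applyVFs l (vfD X h) x₀ = 0 :=
      applyVFs_vfD_eq_zero fun l hl _ hlm => hwords l hl (Nat.lt_succ_of_le hlm)
    have hzero : (h : Euc n → ℝ) x₀ = 0 := hwords [] (List.nil_subset _) m.succ_pos
    simpa only [hzero, sub_zero] using tendstoLocallyUniformlyOn_chenTerm_succ hf hg hv hy
      (ih (hstep (by simp))) (ih (hstep (by simp)))

theorem tendsto_sub_div_pow_succ (hv : Continuous v)
    (hy : ∀ᶠ ε in nhdsWithin 0 (Ioi 0), IsRescaledSol f g v x₀ ε (y ε))
    (hlim : TendstoUniformly y (fun _ => x₀) (nhdsWithin 0 (Ioi 0))) {m : ℕ} {h : SmoothFun n}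
    (hwords : ∀ l : List (VF n), l ⊆ [f, g] → l ≠ [] → l.length ≤ m → applyVFs l h x₀ = 0) :
    Tendsto (fun ε => ((h : Euc n → ℝ) (y ε 1) - (h : Euc n → ℝ) x₀) / ε ^ (m + 1))
      (nhdsWithin 0 (Ioi 0)) (nhds
        (chenTerm (SmoothFun.eval x₀) (lieDerivative f hf) (lieDerivative g hg) 1 v (m + 1) h 1)) :=
  (tendstoLocallyUniformlyOn_chenTerm_succ hf hg hv hy
    (tendstoLocallyUniformlyOn_chenTerm hf hg hv hy hlim (applyVFs_vfD_eq_zero hwords (by simp)))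
    (tendstoLocallyUniformlyOn_chenTerm hf hg hv hy hlim
      (applyVFs_vfD_eq_zero hwords (by simp)))).tendsto_at (right_mem_Icc.2 zero_le_one)

theorem exists_solution_apply_lt_of_chenTerm_neg (hv : Continuous v) {V : SmoothFun n} {m : ℕ}
    (hwords : ∀ l : List (VF n), l ⊆ [f, g] → l ≠ [] → l.length ≤ m → applyVFs l V x₀ = 0)
    (hneg : chenTerm (SmoothFun.eval x₀) (lieDerivative f hf) (lieDerivative g hg) 1 v (m + 1) V 1
      < 0) {ξ η : ℝ} (hξ : 0 < ξ) (hη : 0 < η) :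
    ∃ ε : ℝ, 0 < ε ∧ ε ≤ ξ ∧ ∃ u : ℝ → ℝ, AdmissibleControl u ∧ ∃ x : ℝ → Euc n,
      IsSolOn (fun (y : Euc n) (v : ℝ) => f y + v • g y) u 0 x₀ x ε ∧
      V.1 (x ε) < V.1 x₀ ∧ ∀ s ∈ Icc (0 : ℝ) ε, V.1 (x s) ≤ V.1 x₀ + η := by
  obtain ⟨y, hy, hlim⟩ := exists_isRescaledSol_tendstoUniformly (x₀ := x₀)
    (hf.contDiffAt.of_le (by simp)) (hg.contDiffAt.of_le (by simp)) hv
  have hdecr := (tendsto_sub_div_pow_succ hf hg hv hy hlim hwords).eventually_lt_const hneg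
  have hbound : ∀ᶠ ε in nhdsWithin 0 (Ioi 0), ∀ σ, V.1 (y ε σ) < V.1 x₀ + η := by
    have hVη : ∀ᶠ x in nhds x₀, V.1 x < V.1 x₀ + η :=
      (SmoothFun.contDiff V).continuous.continuousAt.eventually_lt_const (lt_add_of_pos_right _ hη)
    exact mem_prod_top.1 ((tendsto_prod_top_iff.2 hlim).eventually hVη)
  obtain ⟨ε, hyε, hεdecr, hεbound, hεpos, hεξ⟩ :=
    (hy.and (hdecr.and (hbound.and (Ioc_mem_nhdsGT hξ)))).exists
  refine ⟨ε, hεpos, hεξ, fun t => v (t / ε),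
    admissibleControl_of_continuous (hv.comp (continuous_id.div_const ε)), fun t => y ε (t / ε),
    hyε.isSolOn hεpos, ?_, fun s _ => (hεbound _).le⟩
  rw [div_lt_iff₀ (pow_pos hεpos _), zero_mul, sub_neg] at hεdecr
  beta_reduce
  rwa [div_self hεpos.ne']

theorem exists_chenTerm_succ_neg {V : SmoothFun n} {N : ℕ}
    (h : iterD f V (N + 1) x₀ < 0 ∨
      (Odd N ∧ vfD (adIter f g N) V x₀ ≠ 0) ∨
      (Even N ∧ vfD (adIter f g N) V x₀ < 0) ∨
      (iterD f V (N + 1) x₀ = 0 ∧ vfD (adIter g f N) V x₀ ≠ 0)) :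
    ∃ v : ℝ → ℝ, Continuous v ∧ chenTerm (SmoothFun.eval x₀) (lieDerivative f hf)
      (lieDerivative g hg) 1 v (N + 1) V 1 < 0 := by
  have hiter : SmoothFun.eval x₀ ((lieDerivative f hf ^ (N + 1)) V) = iterD f V (N + 1) x₀ :=
    congr_fun (coe_lieDerivative_pow hf V (N + 1)) x₀
  rcases h with hfV | ⟨hodd, had⟩ | ⟨heven, had⟩ | ⟨hfV, had⟩
  · exact exists_chenTerm_neg_of_pow_apply_neg _ _ _ (by rwa [hiter])
  · refine exists_chenTerm_neg_of_ad_pow_right _ _ _ (c := vfD (adIter f g N) V x₀) ?_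
    rw [eval_ad_lieDerivative_pow, hodd.neg_one_pow, neg_one_mul, mul_neg, ← pow_succ,
      neg_neg_iff_pos]
    exact hodd.add_one.pow_pos had
  · refine exists_chenTerm_neg_of_ad_pow_right _ _ _ (c := 1) ?_
    rwa [eval_ad_lieDerivative_pow, heven.neg_one_pow, one_pow, one_mul, one_mul]
  · refine exists_chenTerm_neg_of_ad_pow_left _ _ _ (by rw [hiter, hfV]) ?_
    rw [eval_ad_lieDerivative_pow]
    exact mul_ne_zero (pow_ne_zero _ (by norm_num)) had

end ChenFliess

theorem stmt3_general {n : ℕ} {f g : VF n} {V : Euc n → ℝ} (hf : ContDiff ℝ (⊤ : ℕ∞) f)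
    (hg : ContDiff ℝ (⊤ : ℕ∞) g) (hV : ContDiff ℝ (⊤ : ℕ∞) V) {x₀ : Euc n}
    (h : vfD g V x₀ ≠ 0 ∨ vfD f V x₀ < 0 ∨ ∃ N : ℕ, LieCondZero f g V x₀ N ∧
      (iterD f V (N + 1) x₀ < 0 ∨
       (Odd N ∧ vfD (adIter f g N) V x₀ ≠ 0) ∨
       (Even N ∧ vfD (adIter f g N) V x₀ < 0) ∨
       (iterD f V (N + 1) x₀ = 0 ∧ vfD (adIter g f N) V x₀ ≠ 0)))
    {ξ η : ℝ} (hξ : 0 < ξ) (hη : 0 < η) :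
    ∃ ε : ℝ, 0 < ε ∧ ε ≤ ξ ∧ ∃ u : ℝ → ℝ, AdmissibleControl u ∧ ∃ x : ℝ → Euc n,
      IsSolOn (fun (y : Euc n) (v : ℝ) => f y + v • g y) u 0 x₀ x ε ∧
      V (x ε) < V x₀ ∧ ∀ s ∈ Icc (0 : ℝ) ε, V (x s) ≤ V x₀ + η := by
  let V' : SmoothFun n := ⟨V, mem_ofPred.2 hV⟩
  have hnil : ∀ l : List (VF n), l ⊆ [f, g] → l ≠ [] → l.length ≤ 0 → applyVFs l V x₀ = 0 :=
    fun l _ hne hlen => absurd (List.length_eq_zero_iff.1 (Nat.le_zero.1 hlen)) hne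
  rcases h with hgV | hfV | ⟨N, hN, hP⟩
  · obtain ⟨v, hv, hneg⟩ := exists_chenTerm_neg_of_apply_ne_zero (SmoothFun.eval x₀)
      (lieDerivative f hf) (lieDerivative g hg) (h := V') hgV
    exact exists_solution_apply_lt_of_chenTerm_neg hf hg hv hnil hneg hξ hη
  · obtain ⟨v, hv, hneg⟩ := exists_chenTerm_succ_neg (V := V') (N := 0) hf hg (Or.inl hfV)
    exact exists_solution_apply_lt_of_chenTerm_neg hf hg hv hnil hneg hξ hη
  · obtain ⟨v, hv, hneg⟩ := exists_chenTerm_succ_neg (V := V') hf hg hP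
    exact exists_solution_apply_lt_of_chenTerm_neg hf hg hv
      (fun _ hl hne hlen => hN.applyVFs_eq_zero hl hne hlen) hneg hξ hη

/-- Under the Lie algebraic condition, the affine system
`ẋ = f(x) + u g(x)` satisfies Assumption 1 with the same `V` and `a(s) := 2s`. -/
theorem stmt3 {n : ℕ} (f g : VF n) (V : Euc n → ℝ)
    (hf : ContDiff ℝ (⊤ : ℕ∞) f) (hg : ContDiff ℝ (⊤ : ℕ∞) g) (hf0 : f 0 = 0)
    (hV : ContDiff ℝ (⊤ : ℕ∞) V) (hV0 : V 0 = 0) (hVpos : ∀ x : Euc n, x ≠ 0 → 0 < V x)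
    (hVproper : Tendsto V (cocompact (Euc n)) atTop)
    (hmain : ∀ x : Euc n, x ≠ 0 →
      vfD g V x ≠ 0 ∨
      (vfD g V x = 0 ∧ vfD f V x < 0) ∨
      (∃ N : ℕ, 1 ≤ N ∧ vfD g V x = 0 ∧
        (∀ i : ℕ, 1 ≤ i → i ≤ N → iterD f V i x = 0) ∧
        LieCondZero f g V x N ∧
        (iterD f V (N + 1) x < 0 ∨
         (Odd N ∧ vfD (adIter f g N) V x ≠ 0) ∨
         (Even N ∧ vfD (adIter f g N) V x < 0) ∨
         (iterD f V (N + 1) x = 0 ∧ vfD (adIter g f N) V x ≠ 0)))) :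
    ∀ ξ : ℝ, 0 < ξ → ∀ x₀ : Euc n, x₀ ≠ 0 →
      ∃ ε : ℝ, 0 < ε ∧ ε ≤ ξ ∧ ∃ u : ℝ → ℝ, AdmissibleControl u ∧
        ∃ x : ℝ → Euc n,
          IsSolOn (fun (y : Euc n) (v : ℝ) => f y + v • g y) u 0 x₀ x ε ∧
          V (x ε) < V x₀ ∧ ∀ s ∈ Icc (0:ℝ) ε, V (x s) ≤ 2 * V x₀ := by
  intro ξ hξ x₀ hx₀
  simpa only [two_mul] using stmt3_general hf hg hV ((hmain x₀ hx₀).imp_right (Or.imp And.right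
    fun ⟨N, _, _, _, hN, hP⟩ => ⟨N, hN, hP⟩)) hξ (hVpos x₀ hx₀)
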